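/- Let m, p, n, s, t, k be natural numbers with n ≤ p, s ≤ t, k > 2·p and k > 2·t, let a, b ∈ ℂ, and let φ(z) = a·z^p·conj(z)^n + b·z^s·conj(z)^t. Then for every z ∈ ℂ, (T_φ (T_φ (w ↦ w^k)))(z) = a²·((p+k+m)!·(2p+k+m−n)!/((p+k+m−n)!·(2p+k+m−2n)!))·z^{2p+k−2n} + a·b·( (s+k+m)!·(s+k+m+p−t)!/((s+k+m−t)!·(s+k+m+p−t−n)!) + (p+k+m)!·(p+k+m+s−n)!/((p+k+m−n)!·(p+k+m+s−n−t)!) )·z^{s+p+k−t−n} + b²·((s+k+m)!·(2s+k+m−t)!/((s+k+m−t)!·(2s+k+m−2t)!))·z^{2s+k−2t}. -/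

import Mathlib

/-!
The operator `T_ψ` is `f ↦ P_m (ψ f)`, where `P_m` is the integral operator with kernel `K_m` and
weight `|w|^{2m} e^{-|w|²}`. For `B ≤ A`, `P_m` maps `w ^ A * conj w ^ B` to
`(A + m)! / (A + m - B)! * z ^ (A - B)`: expand the kernel into its power series in `z * conj w`;
rotation invariance kills every term except the one of degree `A - B`, which is a Gaussian moment.
Sum and integral may be exchanged since the series is dominated by that of `e^{|z||w|}`, and
`e^{|z||w|} |w|^N e^{-|w|²}` is integrable. So a symbol `w ^ p * conj w ^ n` acts on monomials as a
weighted shift, and the formula is the square of a sum of two such shifts.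
-/

open MeasureTheory Complex ComplexOrder

/-- Weight function: `|z|^{2m} e^{-|z|^2}` as a complex number. -/
noncomputable def fsWt (m : ℕ) (z : ℂ) : ℂ :=
  ((‖z‖ : ℝ) : ℂ) ^ (2 * m) * ((Real.exp (-‖z‖ ^ 2) : ℝ) : ℂ)

/-- Fock–Sobolev reproducing kernel `K_m(z,w)`. -/
noncomputable def fsKernel (m : ℕ) (z w : ℂ) : ℂ :=
  ∑' j : ℕ, ((m.factorial : ℂ) / ((j + m).factorial : ℂ)) * (z * starRingEnd ℂ w) ^ j

/-- Toeplitz operator with symbol `ψ` acting on `f`, evaluated at `z`. -/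
noncomputable def fsToeplitz (m : ℕ) (ψ f : ℂ → ℂ) (z : ℂ) : ℂ :=
  (1 / ((Real.pi : ℂ) * (m.factorial : ℂ))) *
    ∫ w : ℂ, ψ w * f w * fsKernel m z w * fsWt m w

/-- Fock–Sobolev pairing `⟨g, h⟩`. -/
noncomputable def fsPair (m : ℕ) (g h : ℂ → ℂ) : ℂ :=
  ∫ z : ℂ, g z * starRingEnd ℂ (h z) * fsWt m z

/-- `‖g‖² = ⟨g, g⟩`. -/
noncomputable def fsNormSq (m : ℕ) (g : ℂ → ℂ) : ℂ := fsPair m g g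

open scoped ComplexConjugate

section GaussianMoments

variable {E : Type*} [NormedAddCommGroup E] [NormedSpace ℝ E] [FiniteDimensional ℝ E]
  [Nontrivial E] [MeasurableSpace E] [BorelSpace E] (μ : Measure E) [μ.IsAddHaarMeasure]

theorem integrable_norm_pow_mul_exp_neg_mul_sq (N : ℕ) {b : ℝ} (hb : 0 < b) :
    Integrable (fun x : E => ‖x‖ ^ N * Real.exp (-b * ‖x‖ ^ 2)) μ := by
  rw [integrable_fun_norm_addHaar μ (f := fun y : ℝ => y ^ N * Real.exp (-b * y ^ 2))]
  have hs : (-1 : ℝ) < (Module.finrank ℝ E - 1 + N : ℕ) :=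
    neg_one_lt_zero.trans_le (Nat.cast_nonneg _)
  refine (integrableOn_rpow_mul_exp_neg_mul_sq hb hs).congr_fun (fun y _ => ?_) measurableSet_Ioi
  simp only [Real.rpow_natCast, smul_eq_mul, pow_add, mul_assoc]

theorem integrable_norm_pow_mul_exp_neg_sq_mul_exp (N : ℕ) (r : ℝ) :
    Integrable (fun x : E => ‖x‖ ^ N * Real.exp (-‖x‖ ^ 2) * Real.exp (r * ‖x‖)) μ := by
  refine ((integrable_norm_pow_mul_exp_neg_mul_sq μ N one_half_pos).const_mul
    (Real.exp (r ^ 2 / 2))).mono' (Continuous.aestronglyMeasurable (by fun_prop))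
    (.of_forall fun x => ?_)
  have hexp : -‖x‖ ^ 2 + r * ‖x‖ ≤ r ^ 2 / 2 + -(1 / 2) * ‖x‖ ^ 2 := by
    linarith [sq_nonneg (r - ‖x‖)]
  calc ‖‖x‖ ^ N * Real.exp (-‖x‖ ^ 2) * Real.exp (r * ‖x‖)‖
      = ‖x‖ ^ N * Real.exp (-‖x‖ ^ 2 + r * ‖x‖) := by
        rw [Real.norm_of_nonneg (by positivity), mul_assoc, Real.exp_add]
    _ ≤ ‖x‖ ^ N * Real.exp (r ^ 2 / 2 + -(1 / 2) * ‖x‖ ^ 2) := by gcongr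
    _ = Real.exp (r ^ 2 / 2) * (‖x‖ ^ N * Real.exp (-(1 / 2) * ‖x‖ ^ 2)) := by
        rw [Real.exp_add, mul_left_comm]

end GaussianMoments

theorem integral_norm_pow_mul_exp_neg_sq (N : ℕ) :
    ∫ w : ℂ, ‖w‖ ^ (2 * N) * Real.exp (-‖w‖ ^ 2) = Real.pi * N.factorial := by
  have hN : (-2 : ℝ) < (2 * N : ℕ) := by linarith [(2 * N : ℕ).cast_nonneg (α := ℝ)]
  have hGamma := Complex.integral_rpow_mul_exp_neg_rpow one_le_two hN
  simp only [Real.rpow_natCast, Real.rpow_ofNat] at hGamma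
  rw [hGamma, show (((2 * N : ℕ) : ℝ) + 2) / 2 = N + 1 by push_cast; ring,
    Real.Gamma_nat_eq_factorial]
  ring

theorem integral_pow_mul_conj_pow_mul_radial_eq_zero {A B : ℕ} (h : A ≠ B) (ρ : ℝ → ℂ) :
    ∫ w : ℂ, w ^ A * conj w ^ B * ρ ‖w‖ = 0 := by
  have hAB : (A : ℂ) - B ≠ 0 := sub_ne_zero.mpr (by exact_mod_cast h)
  -- The rotation by this `c` preserves the integral and multiplies the integrand by `-1`.
  let c : Circle := Circle.exp (Real.pi / ((A : ℝ) - B))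
  have hc : (c : ℂ) ^ A * conj (c : ℂ) ^ B = -1 := by
    rw [← Circle.coe_inv_eq_conj, ← Circle.exp_neg, Circle.coe_exp, Circle.coe_exp,
      ← Complex.exp_nat_mul, ← Complex.exp_nat_mul, ← Complex.exp_add, ← Complex.exp_pi_mul_I]
    congr 1
    push_cast
    field_simp
    ring
  have hrot : ∀ w : ℂ, rotation c w ^ A * conj (rotation c w) ^ B * ρ ‖rotation c w‖
      = -(w ^ A * conj w ^ B * ρ ‖w‖) := fun w => by
    rw [LinearIsometryEquiv.norm_map, rotation_apply, map_mul, mul_pow, mul_pow]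
    linear_combination (w ^ A * conj w ^ B * ρ ‖w‖) * hc
  have hinv := (rotation c).measurePreserving.integral_comp
    (rotation c).toHomeomorph.measurableEmbedding (fun w : ℂ => w ^ A * conj w ^ B * ρ ‖w‖)
  simp only [hrot, integral_neg] at hinv
  exact self_eq_neg.mp hinv.symm

section Weight

open scoped Nat

variable (m : ℕ)

theorem continuous_fsWt : Continuous (fsWt m) := by
  unfold fsWt
  fun_prop

theorem norm_pow_mul_conj_pow_mul_fsWt (A B : ℕ) (w : ℂ) :
    ‖w ^ A * conj w ^ B * fsWt m w‖ = ‖w‖ ^ (A + B + 2 * m) * Real.exp (-‖w‖ ^ 2) := by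
  simp only [fsWt, norm_mul, norm_pow, RCLike.norm_conj, norm_real, Real.norm_eq_abs,
    Real.abs_exp, abs_norm]
  ring

theorem aestronglyMeasurable_pow_mul_conj_pow_mul_fsWt (A B : ℕ) :
    AEStronglyMeasurable (fun w : ℂ => w ^ A * conj w ^ B * fsWt m w) := by
  have := continuous_fsWt m
  exact Continuous.aestronglyMeasurable (by fun_prop)

theorem integrable_norm_pow_mul_conj_pow_mul_fsWt_mul_exp (A B : ℕ) (r : ℝ) :
    Integrable fun w : ℂ => ‖w ^ A * conj w ^ B * fsWt m w‖ * Real.exp (r * ‖w‖) := by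
  simp only [norm_pow_mul_conj_pow_mul_fsWt]
  exact integrable_norm_pow_mul_exp_neg_sq_mul_exp volume _ r

theorem integral_pow_mul_conj_pow_mul_fsWt_of_ne {A B : ℕ} (h : A ≠ B) :
    ∫ w : ℂ, w ^ A * conj w ^ B * fsWt m w = 0 :=
  integral_pow_mul_conj_pow_mul_radial_eq_zero h
    fun r => (r : ℂ) ^ (2 * m) * (Real.exp (-r ^ 2) : ℝ)

theorem integral_pow_mul_conj_pow_mul_fsWt_self (A : ℕ) :
    ∫ w : ℂ, w ^ A * conj w ^ A * fsWt m w = Real.pi * (A + m)! := by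
  have hradial : ∀ w : ℂ, w ^ A * conj w ^ A * fsWt m w
      = ((‖w‖ ^ (2 * (A + m)) * Real.exp (-‖w‖ ^ 2) : ℝ) : ℂ) := fun w => by
    rw [← mul_pow, Complex.mul_conj, Complex.normSq_eq_norm_sq, fsWt]
    push_cast
    ring
  simp only [hradial]
  rw [integral_complex_ofReal, integral_norm_pow_mul_exp_neg_sq, ofReal_mul, ofReal_natCast]

end Weight

theorem hasSum_pow_div_factorial_exp (x : ℝ) :
    HasSum (fun j : ℕ => x ^ j / j.factorial) (Real.exp x) := by
  rw [Real.exp_eq_exp_ℝ]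
  exact NormedSpace.expSeries_div_hasSum_exp x

section Kernel

open scoped Nat

variable (m : ℕ) (z : ℂ)

theorem norm_fsKernel_term_le (j : ℕ) (w : ℂ) :
    ‖(m ! : ℂ) / (j + m)! * (z * conj w) ^ j‖ ≤ (‖z‖ * ‖w‖) ^ j / j ! := by
  have hfac : (j ! * m ! : ℝ) ≤ (j + m)! := by
    exact_mod_cast Nat.le_of_dvd (Nat.factorial_pos _)
      (Nat.factorial_mul_factorial_dvd_factorial_add j m)
  have hcoeff : (m ! : ℝ) / (j + m)! ≤ 1 / j ! := by
    rw [div_le_div_iff₀ (by positivity) (by positivity)]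
    linarith
  calc ‖(m ! : ℂ) / (j + m)! * (z * conj w) ^ j‖
      = (m ! : ℝ) / (j + m)! * (‖z‖ * ‖w‖) ^ j := by simp
    _ ≤ 1 / j ! * (‖z‖ * ‖w‖) ^ j := by gcongr
    _ = (‖z‖ * ‖w‖) ^ j / j ! := one_div_mul_eq_div _ _

theorem hasSum_fsKernel (w : ℂ) :
    HasSum (fun j : ℕ => (m ! : ℂ) / (j + m)! * (z * conj w) ^ j) (fsKernel m z w) :=
  (Summable.of_norm_bounded (Real.summable_pow_div_factorial _)
    fun j => norm_fsKernel_term_le m z j w).hasSum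

theorem norm_fsKernel_le (w : ℂ) : ‖fsKernel m z w‖ ≤ Real.exp (‖z‖ * ‖w‖) :=
  tsum_of_norm_bounded (hasSum_pow_div_factorial_exp _) fun j => norm_fsKernel_term_le m z j w

theorem measurable_fsKernel : Measurable (fsKernel m z) :=
  measurable_of_tendsto_metrizable (f := fun N : ℕ => fun w : ℂ =>
      ∑ j ∈ Finset.range N, (m ! : ℂ) / (j + m)! * (z * conj w) ^ j)
    (fun _ => Continuous.measurable (by fun_prop))
    (tendsto_pi_nhds.mpr fun w => (hasSum_fsKernel m z w).tendsto_sum_nat)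

variable {z} {μ : Measure ℂ} {g : ℂ → ℂ}

theorem integrable_mul_fsKernel (hg : AEStronglyMeasurable g μ)
    (hexp : Integrable (fun w => ‖g w‖ * Real.exp (‖z‖ * ‖w‖)) μ) :
    Integrable (fun w => g w * fsKernel m z w) μ := by
  refine hexp.mono' (hg.mul (measurable_fsKernel m z).aestronglyMeasurable)
    (.of_forall fun w => ?_)
  rw [norm_mul]
  gcongr
  exact norm_fsKernel_le m z w

theorem hasSum_integral_mul_fsKernel (hg : AEStronglyMeasurable g μ)
    (hexp : Integrable (fun w => ‖g w‖ * Real.exp (‖z‖ * ‖w‖)) μ) :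
    HasSum (fun j : ℕ => (m ! : ℂ) / (j + m)! * z ^ j * ∫ w, g w * conj w ^ j ∂μ)
      (∫ w, g w * fsKernel m z w ∂μ) := by
  have hbound : ∀ w, HasSum (fun j : ℕ => ‖g w‖ * ((‖z‖ * ‖w‖) ^ j / j !))
      (‖g w‖ * Real.exp (‖z‖ * ‖w‖)) := fun w => (hasSum_pow_div_factorial_exp _).mul_left _
  have hsum : HasSum (fun j : ℕ => ∫ w, g w * ((m ! : ℂ) / (j + m)! * (z * conj w) ^ j) ∂μ)
      (∫ w, g w * fsKernel m z w ∂μ) := by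
    refine hasSum_integral_of_dominated_convergence
      (fun (j : ℕ) w => ‖g w‖ * ((‖z‖ * ‖w‖) ^ j / j !))
      (fun j => hg.mul (Continuous.aestronglyMeasurable (by fun_prop)))
      (fun j => .of_forall fun w => ?_) (.of_forall fun w => (hbound w).summable) ?_
      (.of_forall fun w => (hasSum_fsKernel m z w).mul_left _)
    · rw [norm_mul]
      gcongr
      exact norm_fsKernel_term_le m z j w
    · simpa only [fun w => (hbound w).tsum_eq] using hexp
  refine hsum.congr_fun fun j => ?_
  rw [← integral_const_mul]
  congr with w
  ring

end Kernel

/-- The Fock–Sobolev projection `P_m`, so that `T_ψ f = P_m (ψ f)`. -/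
noncomputable def fsProj (m : ℕ) (g : ℂ → ℂ) (z : ℂ) : ℂ :=
  1 / ((Real.pi : ℂ) * m.factorial) * ∫ w : ℂ, g w * fsKernel m z w * fsWt m w

/-- Absolute convergence of the integral defining `fsProj m g z`; without it the integral has the
junk value `0` and `fsProj` need not be additive. -/
def FSIntegrable (m : ℕ) (g : ℂ → ℂ) (z : ℂ) : Prop :=
  Integrable fun w : ℂ => g w * fsKernel m z w * fsWt m w

theorem fsToeplitz_eq_fsProj (m : ℕ) (ψ f : ℂ → ℂ) (z : ℂ) :
    fsToeplitz m ψ f z = fsProj m (fun w => ψ w * f w) z :=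
  rfl

section Projection

open scoped Nat

variable {m : ℕ} {z : ℂ} {f g : ℂ → ℂ}

theorem FSIntegrable.const_mul_add_const_mul (hf : FSIntegrable m f z) (hg : FSIntegrable m g z)
    (c d : ℂ) : FSIntegrable m (fun w => c * f w + d * g w) z := by
  refine ((hf.const_mul c).add (hg.const_mul d)).congr (.of_forall fun w => ?_)
  simp only [Pi.add_apply]
  ring

theorem fsProj_const_mul_add_const_mul (hf : FSIntegrable m f z) (hg : FSIntegrable m g z)
    (c d : ℂ) : fsProj m (fun w => c * f w + d * g w) z = c * fsProj m f z + d * fsProj m g z := by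
  have hsplit : ∀ w, (c * f w + d * g w) * fsKernel m z w * fsWt m w
      = c * (f w * fsKernel m z w * fsWt m w) + d * (g w * fsKernel m z w * fsWt m w) :=
    fun w => by ring
  simp only [fsProj, hsplit]
  rw [integral_add (hf.const_mul c) (hg.const_mul d), integral_const_mul, integral_const_mul]
  ring

theorem fsToeplitz_const_mul_add_const_mul {ψ : ℂ → ℂ} (hf : FSIntegrable m (fun w => ψ w * f w) z)
    (hg : FSIntegrable m (fun w => ψ w * g w) z) (c d : ℂ) :
    fsToeplitz m ψ (fun w => c * f w + d * g w) z
      = c * fsToeplitz m ψ f z + d * fsToeplitz m ψ g z := by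
  simp only [fsToeplitz_eq_fsProj]
  rw [← fsProj_const_mul_add_const_mul hf hg]
  congr with w
  ring

variable (m z)

theorem fsIntegrable_pow_mul_conj_pow (A B : ℕ) :
    FSIntegrable m (fun w => w ^ A * conj w ^ B) z := by
  simp only [FSIntegrable, mul_right_comm _ (fsKernel m z _)]
  exact integrable_mul_fsKernel m (aestronglyMeasurable_pow_mul_conj_pow_mul_fsWt m A B)
    (integrable_norm_pow_mul_conj_pow_mul_fsWt_mul_exp m A B ‖z‖)

theorem fsProj_pow_mul_conj_pow {A B : ℕ} (h : B ≤ A) :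
    fsProj m (fun w => w ^ A * conj w ^ B) z
      = ((A + m)! : ℂ) / (A + m - B)! * z ^ (A - B) := by
  have hseries := hasSum_integral_mul_fsKernel m
    (aestronglyMeasurable_pow_mul_conj_pow_mul_fsWt m A B)
    (integrable_norm_pow_mul_conj_pow_mul_fsWt_mul_exp m A B ‖z‖)
  have hmoment : ∀ j, ∫ w : ℂ, w ^ A * conj w ^ B * fsWt m w * conj w ^ j
      = ∫ w : ℂ, w ^ A * conj w ^ (B + j) * fsWt m w := fun j => by
    congr with w
    ring
  simp only [hmoment] at hseries
  have hsingle := hasSum_single (A - B) fun j (hj : j ≠ A - B) => show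
      (m ! : ℂ) / (j + m)! * z ^ j * ∫ w : ℂ, w ^ A * conj w ^ (B + j) * fsWt m w = 0 by
    rw [integral_pow_mul_conj_pow_mul_fsWt_of_ne m (by omega), mul_zero]
  simp only [fsProj, mul_right_comm _ (fsKernel m z _)]
  rw [hseries.unique hsingle, Nat.add_sub_cancel' h, integral_pow_mul_conj_pow_mul_fsWt_self,
    ← Nat.sub_add_comm h]
  have hpi : (Real.pi : ℂ) ≠ 0 := ofReal_ne_zero.mpr Real.pi_ne_zero
  have hm : (m ! : ℂ) ≠ 0 := Nat.cast_ne_zero.mpr m.factorial_ne_zero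
  field_simp

end Projection

section BinomialSymbol

open scoped Nat

variable (m p n s t : ℕ) (a b z : ℂ)

theorem binomial_mul_pow (q : ℕ) (w : ℂ) :
    (a * w ^ p * conj w ^ n + b * w ^ s * conj w ^ t) * w ^ q
      = a * (w ^ (p + q) * conj w ^ n) + b * (w ^ (s + q) * conj w ^ t) := by
  ring

theorem fsIntegrable_binomial_mul_pow (q : ℕ) :
    FSIntegrable m (fun w => (a * w ^ p * conj w ^ n + b * w ^ s * conj w ^ t) * w ^ q) z := by
  simp only [binomial_mul_pow]
  exact (fsIntegrable_pow_mul_conj_pow m z _ _).const_mul_add_const_mul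
    (fsIntegrable_pow_mul_conj_pow m z _ _) a b

theorem fsToeplitz_binomial_pow {q : ℕ} (hn : n ≤ p + q) (ht : t ≤ s + q) :
    fsToeplitz m (fun w => a * w ^ p * conj w ^ n + b * w ^ s * conj w ^ t) (fun w => w ^ q) z
      = a * ((p + q + m)! / (p + q + m - n)!) * z ^ (p + q - n)
        + b * ((s + q + m)! / (s + q + m - t)!) * z ^ (s + q - t) := by
  simp only [fsToeplitz_eq_fsProj, binomial_mul_pow]
  rw [fsProj_const_mul_add_const_mul (fsIntegrable_pow_mul_conj_pow m z _ _)
    (fsIntegrable_pow_mul_conj_pow m z _ _), fsProj_pow_mul_conj_pow m z hn,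
    fsProj_pow_mul_conj_pow m z ht, mul_assoc a, mul_assoc b]

end BinomialSymbol

theorem stmt14_general (m p n s t k : ℕ) (hn : 2 * n ≤ 2 * p + k) (ht : 2 * t ≤ 2 * s + k)
    (a b : ℂ) (φ : ℂ → ℂ)
    (hφ : φ = fun z => a * z ^ p * conj z ^ n + b * z ^ s * conj z ^ t) :
    ∀ z : ℂ, fsToeplitz m φ (fsToeplitz m φ (fun w => w ^ k)) z =
      a ^ 2 * (((p + k + m).factorial : ℂ) * ((2 * p + k + m - n).factorial : ℂ)
          / (((p + k + m - n).factorial : ℂ) * ((2 * p + k + m - 2 * n).factorial : ℂ)))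
          * z ^ (2 * p + k - 2 * n)
      + a * b * ((((s + k + m).factorial : ℂ) * ((s + k + m + p - t).factorial : ℂ)
            / (((s + k + m - t).factorial : ℂ) * ((s + k + m + p - t - n).factorial : ℂ)))
          + (((p + k + m).factorial : ℂ) * ((p + k + m + s - n).factorial : ℂ)
            / (((p + k + m - n).factorial : ℂ) * ((p + k + m + s - n - t).factorial : ℂ))))
          * z ^ (s + p + k - t - n)
      + b ^ 2 * (((s + k + m).factorial : ℂ) * ((2 * s + k + m - t).factorial : ℂ)
          / (((s + k + m - t).factorial : ℂ) * ((2 * s + k + m - 2 * t).factorial : ℂ)))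
          * z ^ (2 * s + k - 2 * t) := by
  intro z
  have hfirst : fsToeplitz m φ (fun w => w ^ k) = fun w =>
      a * ((p + k + m).factorial / (p + k + m - n).factorial) * w ^ (p + k - n)
        + b * ((s + k + m).factorial / (s + k + m - t).factorial) * w ^ (s + k - t) := by
    funext w
    rw [hφ, fsToeplitz_binomial_pow m p n s t a b w (by omega) (by omega)]
  have hleft : fsToeplitz m φ (fun w => w ^ (p + k - n)) z =
      a * ((2 * p + k + m - n).factorial / (2 * p + k + m - 2 * n).factorial)
          * z ^ (2 * p + k - 2 * n)
        + b * ((p + k + m + s - n).factorial / (p + k + m + s - n - t).factorial)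
          * z ^ (s + p + k - t - n) := by
    rw [hφ, fsToeplitz_binomial_pow m p n s t a b z (by omega) (by omega)]
    repeat' first | omega | congr 1
  have hright : fsToeplitz m φ (fun w => w ^ (s + k - t)) z =
      a * ((s + k + m + p - t).factorial / (s + k + m + p - t - n).factorial)
          * z ^ (s + p + k - t - n)
        + b * ((2 * s + k + m - t).factorial / (2 * s + k + m - 2 * t).factorial)
          * z ^ (2 * s + k - 2 * t) := by
    rw [hφ, fsToeplitz_binomial_pow m p n s t a b z (by omega) (by omega)]
    repeat' first | omega | congr 1
  have hint : ∀ q : ℕ, FSIntegrable m (fun w => φ w * w ^ q) z :=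
    hφ ▸ fsIntegrable_binomial_mul_pow m p n s t a b z
  rw [hfirst, fsToeplitz_const_mul_add_const_mul (hint _) (hint _), hleft, hright]
  ring

theorem stmt14 (m p n s t k : ℕ) (hn : n ≤ p) (hs : s ≤ t)
    (hk1 : k > 2 * p) (hk2 : k > 2 * t) (a b : ℂ) (φ : ℂ → ℂ) (hφ : φ = fun z => a * z ^ p * (starRingEnd ℂ z) ^ n + b * z ^ s * (starRingEnd ℂ z) ^ t) :
    ∀ z : ℂ, fsToeplitz m φ (fsToeplitz m φ (fun w => w ^ k)) z =
      a ^ 2 * (((p + k + m).factorial : ℂ) * ((2 * p + k + m - n).factorial : ℂ)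
          / (((p + k + m - n).factorial : ℂ) * ((2 * p + k + m - 2 * n).factorial : ℂ)))
          * z ^ (2 * p + k - 2 * n)
      + a * b * ((((s + k + m).factorial : ℂ) * ((s + k + m + p - t).factorial : ℂ)
            / (((s + k + m - t).factorial : ℂ) * ((s + k + m + p - t - n).factorial : ℂ)))
          + (((p + k + m).factorial : ℂ) * ((p + k + m + s - n).factorial : ℂ)
            / (((p + k + m - n).factorial : ℂ) * ((p + k + m + s - n - t).factorial : ℂ))))
          * z ^ (s + p + k - t - n)
      + b ^ 2 * (((s + k + m).factorial : ℂ) * ((2 * s + k + m - t).factorial : ℂ)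
          / (((s + k + m - t).factorial : ℂ) * ((2 * s + k + m - 2 * t).factorial : ℂ)))
          * z ^ (2 * s + k - 2 * t) :=
  stmt14_general m p n s t k (by omega) (by omega) a b φ hφ
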